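/- Define F : {(φ₁, φ₂) ∈ ℝ² : 0 < φ₁ < φ₂ < 2π} → ℝ by F(φ₁, φ₂) = −(ζ(2)/(4π²))·((3φ₁ − 2π)(cos(φ₂) − 1) − (3φ₂ − 4π)(cos(φ₁) − 1)) + (3ζ(2)/(2π²))·(sin(φ₁)·log(sin((φ₂−φ₁)/2)/sin(φ₁/2)) − sin(φ₂)·log(sin((φ₂−φ₁)/2)/sin(φ₂/2))). Then for every x ∈ (0,1): L₂(x) = ζ(2)/2 + (ζ(2)/(2π))·(arctan(2x/(1−x²)) − π/2) − ∫₀^{−(x+1)/(2x)} F(2·arccot(−t + (1−x)/(2x)), 2·arccot(−t − (1−x)/(2x))) dt + ∫₀^{(x+1)/2} F(2·arccot(−t + (1−x)/2), 2·arccot(−t − (1−x)/2)) dt − ∫₀^{1/2} F(2·arccot(−t + 1/2), 2·arccot(−t − 1/2)) dt + ∫₀^{x/2} F(2·arccot(−t + x/2), 2·arccot(−t − x/2)) dt. -/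

import Mathlib

open Real

/-- Rogers' dilogarithm `L₂(x) = -(1/2)·∫₀ˣ (log t/(1-t) + log(1-t)/t) dt`. -/
noncomputable def rogersL2 (x : ℝ) : ℝ :=
  -(1 / 2) * ∫ t in (0:ℝ)..x, (Real.log t / (1 - t) + Real.log (1 - t) / t)

/-- `arccot(s) = π/2 - arctan(s)`, with values in `(0, π)`. -/
noncomputable def arccot (s : ℝ) : ℝ := π / 2 - Real.arctan s

/-- The explicit integrand `F_c^♭` for the orientation cocycle, with `ζ(2) = π²/6`. -/
noncomputable def Fc (φ₁ φ₂ : ℝ) : ℝ :=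
  -(π ^ 2 / 6 / (4 * π ^ 2)) *
      ((3 * φ₁ - 2 * π) * (Real.cos φ₂ - 1) - (3 * φ₂ - 4 * π) * (Real.cos φ₁ - 1))
    + (3 * (π ^ 2 / 6) / (2 * π ^ 2)) *
      (Real.sin φ₁ * Real.log (Real.sin ((φ₂ - φ₁) / 2) / Real.sin (φ₁ / 2))
        - Real.sin φ₂ * Real.log (Real.sin ((φ₂ - φ₁) / 2) / Real.sin (φ₂ / 2)))

noncomputable def rdm (u : ℝ) : ℝ := Real.log (1 + u ^ 2) / 2

noncomputable def rdP (p : ℝ × ℝ) : ℝ :=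
  -(1/2) * (arctan p.2 * (1 / (1 + p.1 ^ 2))) - (1/2) * ((p.1 / (1 + p.1 ^ 2)) * log (p.1 - p.2))
   + (1/2) * ((p.1 / (1 + p.1 ^ 2)) * rdm p.2) + (1/2) * ((rdm p.1 - rdm p.2) * (1 / (p.1 - p.2)))
   - π / 12 * (1 / (1 + p.1 ^ 2))

noncomputable def rdQ (p : ℝ × ℝ) : ℝ :=
  (1/2) * (arctan p.1 * (1 / (1 + p.2 ^ 2))) + (1/2) * ((p.2 / (1 + p.2 ^ 2)) * log (p.1 - p.2))
   - (1/2) * ((p.2 / (1 + p.2 ^ 2)) * rdm p.1) - (1/2) * ((rdm p.1 - rdm p.2) * (1 / (p.1 - p.2)))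
   - π / 12 * (1 / (1 + p.2 ^ 2))

lemma rdm_deriv (u : ℝ) : HasDerivAt rdm (u / (1 + u ^ 2)) u := by
  have h : (1 + u ^ 2) ≠ 0 := by positivity
  have := (((hasDerivAt_id u).pow 2).const_add 1).log (by simpa using h)
  have := this.div_const 2
  refine this.congr_deriv ?_
  simp; field_simp

lemma rda_deriv (u : ℝ) : HasDerivAt (fun u : ℝ => 1 / (1 + u ^ 2)) (-2 * u / (1 + u ^ 2) ^ 2) u := by
  have h : (1 + u ^ 2) ≠ 0 := by positivity
  have := (hasDerivAt_const u (1:ℝ)).div (((hasDerivAt_id u).pow 2).const_add 1) (by simpa using h)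
  refine this.congr_deriv ?_
  simp

lemma rdb_deriv (u : ℝ) : HasDerivAt (fun u : ℝ => u / (1 + u ^ 2)) ((1 - u ^ 2) / (1 + u ^ 2) ^ 2) u := by
  have h : (1 + u ^ 2) ≠ 0 := by positivity
  have := (hasDerivAt_id u).div (((hasDerivAt_id u).pow 2).const_add 1) (by simpa using h)
  refine this.congr_deriv ?_
  simp; ring

noncomputable abbrev fs : ℝ × ℝ →L[ℝ] ℝ := ContinuousLinearMap.fst ℝ ℝ ℝ
noncomputable abbrev sn : ℝ × ℝ →L[ℝ] ℝ := ContinuousLinearMap.snd ℝ ℝ ℝ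

lemma rd_fst {f : ℝ → ℝ} {f' : ℝ} (p : ℝ × ℝ) (h : HasDerivAt f f' p.1) :
    HasFDerivAt (fun p : ℝ × ℝ => f p.1) (f' • fs) p :=
  h.comp_hasFDerivAt p hasFDerivAt_fst

lemma rd_snd {f : ℝ → ℝ} {f' : ℝ} (p : ℝ × ℝ) (h : HasDerivAt f f' p.2) :
    HasFDerivAt (fun p : ℝ × ℝ => f p.2) (f' • sn) p :=
  h.comp_hasFDerivAt p hasFDerivAt_snd

lemma rd_log (p : ℝ × ℝ) (hp : p.2 < p.1) :
    HasFDerivAt (fun p : ℝ × ℝ => log (p.1 - p.2)) ((p.1 - p.2)⁻¹ • (fs - sn)) p :=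
  (hasFDerivAt_fst.sub hasFDerivAt_snd).log (by simpa using (sub_pos.2 hp).ne')

lemma rd_inv (p : ℝ × ℝ) (hp : p.2 < p.1) :
    HasFDerivAt (fun p : ℝ × ℝ => 1 / (p.1 - p.2)) ((-1 / (p.1 - p.2) ^ 2) • (fs - sn)) p := by
  have h := (sub_pos.2 hp).ne'
  have h1 : HasDerivAt (fun u : ℝ => 1 / u) (-1 / (p.1 - p.2) ^ 2) (p.1 - p.2) := by
    have := hasDerivAt_inv h
    simp only [one_div]
    refine this.congr_deriv ?_
    field_simp
  exact h1.comp_hasFDerivAt (f := fun p : ℝ × ℝ => p.1 - p.2) p (hasFDerivAt_fst.sub hasFDerivAt_snd)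

lemma rd_decomp (L : ℝ × ℝ →L[ℝ] ℝ) : L = L (1, 0) • fs + L (0, 1) • sn := by
  ext <;> simp

lemma rdP_fderiv (p : ℝ × ℝ) (hp : p.2 < p.1) : ∃ c : ℝ, HasFDerivAt rdP (c • fs +
   (-(1/2) * (1 / ((1 + p.1 ^ 2) * (1 + p.2 ^ 2))) + (1/2) * (p.1 / (1 + p.1 ^ 2)) / (p.1 - p.2)
    + (1/2) * ((p.1 / (1 + p.1 ^ 2)) * (p.2 / (1 + p.2 ^ 2)))
    - (1/2) * (p.2 / (1 + p.2 ^ 2)) / (p.1 - p.2)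
    + (1/2) * (rdm p.1 - rdm p.2) / (p.1 - p.2) ^ 2) • sn) p := by
  have h := (sub_pos.2 hp).ne'
  have h1 : (1 + p.1 ^ 2) ≠ 0 := by positivity
  have h2 : (1 + p.2 ^ 2) ≠ 0 := by positivity
  have key := ((((((rd_snd p (hasDerivAt_arctan p.2)).mul (rd_fst p (rda_deriv p.1))).const_mul (-(1/2))).sub
    (((rd_fst p (rdb_deriv p.1)).mul (rd_log p hp)).const_mul (1/2))).add
    (((rd_fst p (rdb_deriv p.1)).mul (rd_snd p (rdm_deriv p.2))).const_mul (1/2))).add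
    ((((rd_fst p (rdm_deriv p.1)).sub (rd_snd p (rdm_deriv p.2))).mul (rd_inv p hp)).const_mul (1/2))).sub
    ((rd_fst p (rda_deriv p.1)).const_mul (π/12))
  refine ⟨_, key.congr_fderiv ((rd_decomp _).trans (congrArg₂ (· + ·) rfl (congrArg (· • sn) ?_)))⟩
  simp; field_simp; ring

lemma rdQ_fderiv (p : ℝ × ℝ) (hp : p.2 < p.1) : ∃ c : ℝ, HasFDerivAt rdQ (
   ((1/2) * (1 / ((1 + p.1 ^ 2) * (1 + p.2 ^ 2))) + (1/2) * (p.2 / (1 + p.2 ^ 2)) / (p.1 - p.2)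
    - (1/2) * ((p.1 / (1 + p.1 ^ 2)) * (p.2 / (1 + p.2 ^ 2)))
    - (1/2) * (p.1 / (1 + p.1 ^ 2)) / (p.1 - p.2)
    + (1/2) * (rdm p.1 - rdm p.2) / (p.1 - p.2) ^ 2) • fs + c • sn) p := by
  have h := (sub_pos.2 hp).ne'
  have h1 : (1 + p.1 ^ 2) ≠ 0 := by positivity
  have h2 : (1 + p.2 ^ 2) ≠ 0 := by positivity
  have key := ((((((rd_fst p (hasDerivAt_arctan p.1)).mul (rd_snd p (rda_deriv p.2))).const_mul (1/2)).add
    (((rd_snd p (rdb_deriv p.2)).mul (rd_log p hp)).const_mul (1/2))).sub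
    (((rd_snd p (rdb_deriv p.2)).mul (rd_fst p (rdm_deriv p.1))).const_mul (1/2))).sub
    ((((rd_fst p (rdm_deriv p.1)).sub (rd_snd p (rdm_deriv p.2))).mul (rd_inv p hp)).const_mul (1/2))).sub
    ((rd_snd p (rda_deriv p.2)).const_mul (π/12))
  refine ⟨_, key.congr_fderiv ((rd_decomp _).trans (congrArg₂ (· + ·) (congrArg (· • fs) ?_) rfl))⟩
  simp; field_simp; ring

lemma rdJ : ∃ J : ℝ × ℝ → ℝ, ∀ p : ℝ × ℝ, p.2 < p.1 → HasFDerivAt J (rdP p • fs + rdQ p • sn) p := by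
  choose! c hc using rdP_fderiv
  choose! d hd using rdQ_fderiv
  have hso : IsOpen {p : ℝ × ℝ | p.2 < p.1} := isOpen_lt continuous_snd continuous_fst
  have hs : Convex ℝ {p : ℝ × ℝ | p.2 < p.1} := by
    intro p hp q hq a b ha hb hab
    simp only [Set.mem_ofPred_eq, Prod.snd_add, Prod.fst_add, Prod.smul_fst, Prod.smul_snd, smul_eq_mul] at *
    rcases ha.eq_or_lt with rfl | ha
    · have : b = 1 := by linarith
      subst this; linarith
    · nlinarith [mul_pos ha (sub_pos.2 hp), mul_nonneg hb (sub_pos.2 hq).le]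
  have key : ∃ J : ℝ × ℝ → ℝ, ∀ p ∈ {p : ℝ × ℝ | p.2 < p.1},
      HasFDerivWithinAt J (rdP p • fs + rdQ p • sn) {p : ℝ × ℝ | p.2 < p.1} p := by
    refine hs.exists_forall_hasFDerivWithinAt_of_hasFDerivWithinAt_symmetric
      (ω := fun p => rdP p • fs + rdQ p • sn)
      (fun p hp => (((hc p hp).smul_const fs).add ((hd p hp).smul_const sn)).hasFDerivWithinAt) ?_
    intro p hp x _ y _
    have hp : p.2 < p.1 := hp
    have h := (sub_pos.2 hp).ne'
    have h1 : (1 + p.1 ^ 2) ≠ 0 := by positivity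
    have h2 : (1 + p.2 ^ 2) ≠ 0 := by positivity
    simp
    field_simp
    ring
  obtain ⟨J, hJ⟩ := key
  exact ⟨J, fun p hp => (hJ p hp).hasFDerivAt (hso.mem_nhds hp)⟩

lemma rl_bound {t : ℝ} (h0 : 0 < t) (h1 : t < 1) : |log t / (1 - t)| ≤ 1 - log t := by
  have hl : log t < 0 := log_neg h0 h1
  have h2 : 0 < 1 - t := by linarith
  rw [abs_of_nonpos (div_nonpos_of_nonpos_of_nonneg hl.le h2.le), ← neg_div, div_le_iff₀ h2]
  have h3 := Real.log_le_sub_one_of_pos (inv_pos.2 h0)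
  rw [Real.log_inv] at h3
  have h4 : t * -log t ≤ t * (t⁻¹ - 1) := mul_le_mul_of_nonneg_left h3 h0.le
  have h5 : t * (t⁻¹ - 1) = 1 - t := by field_simp
  nlinarith

lemma rl_meas : Measurable (fun t : ℝ => log t / (1 - t)) := by fun_prop

lemma rl_int : IntervalIntegrable (fun t : ℝ => log t / (1 - t)) MeasureTheory.volume 0 1 := by
  have hb : IntervalIntegrable (fun t : ℝ => 1 - log t) MeasureTheory.volume 0 1 :=
    intervalIntegrable_const.sub intervalIntegral.intervalIntegrable_log'
  rw [intervalIntegrable_iff_integrableOn_Ioo_of_le zero_le_one] at hb ⊢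
  refine hb.mono' rl_meas.aestronglyMeasurable ?_
  refine (MeasureTheory.ae_restrict_iff' measurableSet_Ioo).2 (Filter.Eventually.of_forall fun t ht => ?_)
  exact rl_bound ht.1 ht.2

lemma rl_pow_int (n : ℕ) : IntervalIntegrable (fun t : ℝ => t ^ n * log t) MeasureTheory.volume 0 1 :=
  intervalIntegral.intervalIntegrable_log'.continuousOn_mul (by fun_prop)

lemma rl_pow (n : ℕ) : ∫ t in (0:ℝ)..1, t ^ n * log t = - (1 / ((n + 1 : ℕ) : ℝ) ^ 2) := by
  have hn : ((n:ℝ) + 1) ≠ 0 := by positivity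
  rw [intervalIntegral.integral_eq_sub_of_hasDerivAt_of_le zero_le_one
    (f := fun t => t ^ n * (t * log t) / (n + 1) - t ^ (n + 1) / (n + 1) ^ 2) ?_ ?_ (rl_pow_int n)]
  · simp
  · have := Real.continuous_mul_log
    exact Continuous.continuousOn (by fun_prop)
  · intro t ht
    have h0 : t ≠ 0 := ht.1.ne'
    have h1 : HasDerivAt (fun t : ℝ => t ^ (n + 1) * log t / (n + 1) - t ^ (n + 1) / (n + 1) ^ 2)
      (t ^ n * log t) t := by
      have := (((hasDerivAt_pow (n + 1) t).mul (hasDerivAt_log h0)).div_const ((n:ℝ) + 1)).sub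
        ((hasDerivAt_pow (n + 1) t).div_const (((n:ℝ) + 1) ^ 2))
      refine this.congr_deriv ?_
      simp
      field_simp
      ring
    refine h1.congr_of_eventuallyEq (Filter.Eventually.of_forall fun s => ?_)
    simp only; ring

lemma rl_one : ∫ t in (0:ℝ)..1, log t / (1 - t) = - (π ^ 2 / 6) := by
  have hz : HasSum (fun n : ℕ => - (1 / ((n + 1 : ℕ) : ℝ) ^ 2)) (-(π ^ 2 / 6)) := by
    have := hasSum_zeta_two
    rw [← hasSum_nat_add_iff' 1] at this
    simpa using this.neg
  have h1 : ∀ n : ℕ, ∫ t in Set.Ioo (0:ℝ) 1, t ^ n * log t = - (1 / ((n + 1 : ℕ) : ℝ) ^ 2) := by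
    intro n
    rw [← rl_pow n, intervalIntegral.integral_of_le zero_le_one, MeasureTheory.integral_Ioc_eq_integral_Ioo]
  have h2 : ∀ n : ℕ, ∫ t in Set.Ioo (0:ℝ) 1, ‖t ^ n * log t‖ = (1 / ((n + 1 : ℕ) : ℝ) ^ 2) := by
    intro n
    rw [← neg_eq_iff_eq_neg.2 (h1 n), ← MeasureTheory.integral_neg]
    refine MeasureTheory.setIntegral_congr_fun measurableSet_Ioo fun t ht => ?_
    have hl : log t < 0 := log_neg ht.1 ht.2
    have := pow_pos ht.1 n
    simp only [norm_eq_abs]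
    rw [abs_of_nonpos (mul_nonpos_of_nonneg_of_nonpos this.le hl.le)]
  have h3 := MeasureTheory.hasSum_integral_of_summable_integral_norm
    (μ := MeasureTheory.volume.restrict (Set.Ioo (0:ℝ) 1)) (F := fun (n : ℕ) t => t ^ n * log t)
    (fun n => (intervalIntegrable_iff_integrableOn_Ioo_of_le zero_le_one).1 (rl_pow_int n))
    (by simp only [h2]; simpa using hz.neg.summable)
  simp only [h1] at h3
  rw [← h3.unique hz, intervalIntegral.integral_of_le zero_le_one, MeasureTheory.integral_Ioc_eq_integral_Ioo]
  refine MeasureTheory.setIntegral_congr_fun measurableSet_Ioo fun t ht => ?_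
  rw [tsum_mul_right, tsum_geometric_of_lt_one ht.1.le ht.2]
  ring

lemma rl2_int : IntervalIntegrable (fun t : ℝ => log (1 - t) / t) MeasureTheory.volume 0 1 := by
  have := (rl_int.comp_sub_left 1).symm
  simpa using this

lemma rl2_one : ∫ t in (0:ℝ)..1, log (1 - t) / t = - (π ^ 2 / 6) := by
  have := intervalIntegral.integral_comp_sub_left (a := 0) (b := 1) (fun t : ℝ => log t / (1 - t)) 1
  simp at this
  rw [this, rl_one]

lemma rogers_one : rogersL2 1 = π ^ 2 / 6 := by
  unfold rogersL2
  rw [intervalIntegral.integral_add rl_int rl2_int, rl_one, rl2_one]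
  ring

lemma rogers_cont : ContinuousOn rogersL2 (Set.Icc 0 1) := by
  have h := intervalIntegral.continuousOn_primitive_interval
    ((intervalIntegrable_iff' (by simp)).1 (rl_int.add rl2_int))
  rw [Set.uIcc_of_le zero_le_one] at h
  exact continuousOn_const.mul h

lemma rogers_deriv {x : ℝ} (hx : x ∈ Set.Ioo (0:ℝ) 1) :
    HasDerivAt rogersL2 (-(1/2) * (log x / (1 - x) + log (1 - x) / x)) x := by
  refine HasDerivAt.const_mul _ (intervalIntegral.integral_hasDerivAt_right ?_ ?_ ?_)
  · refine (rl_int.add rl2_int).mono_set ?_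
    rw [Set.uIcc_of_le zero_le_one, Set.uIcc_of_le hx.1.le]
    exact Set.Icc_subset_Icc_right hx.2.le
  · have : Measurable (fun t : ℝ => log t / (1 - t) + log (1 - t) / t) := by fun_prop
    exact this.stronglyMeasurable.stronglyMeasurableAtFilter
  · have h1 : x ≠ 0 := hx.1.ne'
    have h2 : 1 - x ≠ 0 := (sub_pos.2 hx.2).ne'
    fun_prop (disch := assumption)

noncomputable def rdF (a t : ℝ) : ℝ :=
  (1/12) * ((π - 6 * arctan (-t + a)) / (1 + (-t - a) ^ 2) + (π + 6 * arctan (-t - a)) / (1 + (-t + a) ^ 2))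
  + (1/2) * ((2 * a * log (2 * a)) * ((1 - (-t + a) * (-t - a)) / ((1 + (-t + a) ^ 2) * (1 + (-t - a) ^ 2)))
     - (-t + a) / (1 + (-t + a) ^ 2) * rdm (-t - a) + (-t - a) / (1 + (-t - a) ^ 2) * rdm (-t + a))

lemma rdF_cont : Continuous (Function.uncurry rdF) := by
  unfold Function.uncurry rdF rdm
  have h : Continuous (fun p : ℝ × ℝ => 2 * p.1 * log (2 * p.1)) :=
    Real.continuous_mul_log.comp (by fun_prop : Continuous (fun p : ℝ × ℝ => 2 * p.1))
  have h1 : ∀ x : ℝ, 1 + x ^ 2 ≠ 0 := fun x => by positivity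
  have h2 : ∀ x y : ℝ, (1 + x ^ 2) * (1 + y ^ 2) ≠ 0 := fun x y => by positivity
  have ha := Real.continuous_arctan
  fun_prop (disch := intros; first | apply h1 | apply h2)

lemma rdF_eq (a t : ℝ) (ha : 0 < a) : rdF a t = - (rdP (-t + a, -t - a) + rdQ (-t + a, -t - a)) := by
  unfold rdF rdP rdQ
  have h1 : ∀ x : ℝ, 1 + x ^ 2 ≠ 0 := fun x => by positivity
  have e : -t + a - (-t - a) = 2 * a := by ring
  have hu := h1 (-t + a)
  have hv := h1 (-t - a)
  simp only [e]
  generalize rdm (-t + a) = m1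
  generalize rdm (-t - a) = m2
  generalize log (2 * a) = l
  generalize arctan (-t + a) = A
  generalize arctan (-t - a) = B
  have e2 : a = ((-t + a) - (-t - a)) / 2 := by ring
  have : 2 * a * l * ((1 - (-t + a) * (-t - a)) / ((1 + (-t + a) ^ 2) * (1 + (-t - a) ^ 2)))
     = l * ((-t + a) / (1 + (-t + a) ^ 2) - (-t - a) / (1 + (-t - a) ^ 2)) := by
    field_simp
    ring
  rw [this]
  ring

lemma cos_arctan_pos' (u : ℝ) : 0 < cos (arctan u) := cos_arctan_pos u

lemma log_cos_arctan (u : ℝ) : log (cos (arctan u)) = - rdm u := by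
  rw [cos_arctan, one_div, log_inv, log_sqrt (by positivity), rdm]

lemma Fc_eq (a t : ℝ) (ha : 0 < a) :
    Fc (2 * arccot (-t + a)) (2 * arccot (-t - a)) = rdF a t := by
  have hpi := Real.pi_ne_zero
  rw [rdF_eq a t ha]
  have e : -t + a - (-t - a) = 2 * a := by ring
  unfold Fc arccot rdP rdQ
  simp only [e]
  generalize hu : -t + a = u at *
  generalize hv : -t - a = v at *
  have hcu : cos (2 * (π / 2 - arctan u)) - 1 = -2 / (1 + u ^ 2) := by
    rw [cos_two_mul, cos_pi_div_two_sub, sin_sq, cos_sq_arctan]; field_simp; ring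
  have hcv : cos (2 * (π / 2 - arctan v)) - 1 = -2 / (1 + v ^ 2) := by
    rw [cos_two_mul, cos_pi_div_two_sub, sin_sq, cos_sq_arctan]; field_simp; ring
  have hs : ∀ u : ℝ, sin (2 * (π / 2 - arctan u)) = 2 * u / (1 + u ^ 2) := fun u => by
    rw [sin_two_mul, cos_pi_div_two_sub, sin_pi_div_two_sub, ← tan_mul_cos (cos_arctan_pos u).ne', tan_arctan]
    have := cos_sq_arctan u
    rw [show 2 * cos (arctan u) * (u * cos (arctan u)) = 2 * u * cos (arctan u) ^ 2 by ring, this]; ring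
  have cu := cos_arctan_pos u
  have cv := cos_arctan_pos v
  have hd : sin ((2 * (π / 2 - arctan v) - 2 * (π / 2 - arctan u)) / 2)
      = 2 * a * (cos (arctan u) * cos (arctan v)) := by
    rw [show (2 * (π / 2 - arctan v) - 2 * (π / 2 - arctan u)) / 2 = arctan u - arctan v by ring, sin_sub,
      ← tan_mul_cos cu.ne', ← tan_mul_cos cv.ne', tan_arctan, tan_arctan, ← e]
    ring
  have hh : ∀ u : ℝ, sin (2 * (π / 2 - arctan u) / 2) = cos (arctan u) := fun u => by
    rw [mul_div_cancel_left₀ _ two_ne_zero, sin_pi_div_two_sub]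
  rw [hcu, hcv, hs, hs, hd, hh, hh]
  rw [show 2 * a * (cos (arctan u) * cos (arctan v)) / cos (arctan u) = 2 * a * cos (arctan v) by field_simp,
    show 2 * a * (cos (arctan u) * cos (arctan v)) / cos (arctan v) = 2 * a * cos (arctan u) by field_simp,
    log_mul (by positivity) cv.ne', log_mul (by positivity) cu.ne', log_cos_arctan, log_cos_arctan]
  have h1 : (1 + u ^ 2) ≠ 0 := by positivity
  have h2 : (1 + v ^ 2) ≠ 0 := by positivity
  field_simp
  ring

lemma rd_zero (t : ℝ) : rdF 0 t = π / 6 * (1 / (1 + t ^ 2)) := by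
  have h1 : (1 + t ^ 2) ≠ 0 := by positivity
  simp [rdF]
  field_simp
  ring

lemma rd_zero_int (T : ℝ) : ∫ t in (0:ℝ)..T, rdF 0 t = π / 6 * arctan T := by
  simp only [rd_zero]
  rw [intervalIntegral.integral_const_mul]
  simp

noncomputable def rdPhi (a T : ℝ) : ℝ := ∫ t in (0:ℝ)..T, rdF a t

lemma rdPhi_cont : Continuous (Function.uncurry rdPhi) :=
  intervalIntegral.continuous_parametric_primitive_of_continuous rdF_cont

lemma rdJ_curve {J : ℝ × ℝ → ℝ}
    (hJ : ∀ p : ℝ × ℝ, p.2 < p.1 → HasFDerivAt J (rdP p • fs + rdQ p • sn) p)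
    {f g : ℝ → ℝ} {f' g' x : ℝ} (hf : HasDerivAt f f' x) (hg : HasDerivAt g g' x) (h : g x < f x) :
    HasDerivAt (fun x => J (f x, g x)) (rdP (f x, g x) * f' + rdQ (f x, g x) * g') x := by
  have := (hJ (f x, g x) h).comp_hasDerivAt x (hf.prodMk hg)
  refine this.congr_deriv ?_
  simp

lemma rdPhi_J {J : ℝ × ℝ → ℝ}
    (hJ : ∀ p : ℝ × ℝ, p.2 < p.1 → HasFDerivAt J (rdP p • fs + rdQ p • sn) p)
    {a : ℝ} (T : ℝ) (ha : 0 < a) : rdPhi a T = J (-T + a, -T - a) - J (1, -1) := by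
  have h1 : rdPhi a T = J (-T + a, -T - a) - J (-0 + a, -0 - a) := by
    refine intervalIntegral.integral_eq_sub_of_hasDerivAt (f := fun t => J (-t + a, -t - a)) ?_ ?_
    · intro t _
      have := rdJ_curve hJ (f := fun t => -t + a) (g := fun t => -t - a) ((hasDerivAt_neg t).add_const a) ((hasDerivAt_neg t).sub_const a) (by linarith)
      refine this.congr_deriv ?_
      rw [rdF_eq a t ha]
      ring
    · have : Continuous (rdF a) := rdF_cont.uncurry_left a
      exact this.intervalIntegrable _ _
  have h2 : J (a, -a) = J (1, -1) := by
    have hd : ∀ x ∈ Set.Ioi (0:ℝ), HasDerivAt (fun x => J (x, -x)) 0 x := by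
      intro x hx
      have hx : 0 < x := hx
      have := rdJ_curve hJ (f := fun x => x) (g := fun x => -x) (hasDerivAt_id' x) (hasDerivAt_neg x)
        (by linarith)
      refine this.congr_deriv ?_
      simp [rdP, rdQ, rdm]
      ring
    have hc := isOpen_Ioi.is_const_of_deriv_eq_zero (f := fun x => J (x, -x)) (isPreconnected_Ioi)
      (fun x hx => (hd x hx).differentiableAt.differentiableWithinAt)
      (fun x hx => (hd x hx).deriv) (x := a) (y := 1) ha (Set.mem_Ioi.2 one_pos)
    exact hc
  rw [h1, ← h2]
  simp

noncomputable def rdR (x : ℝ) : ℝ :=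
  π ^ 2 / 12 + π / 12 * (2 * arctan x - π / 2)
    - rdPhi ((1 - x) / (2 * x)) (-(x + 1) / (2 * x)) + rdPhi ((1 - x) / 2) ((x + 1) / 2)
    - rdPhi (1 / 2) (1 / 2) + rdPhi (x / 2) (x / 2)

lemma rdR_one : rdR 1 = π ^ 2 / 6 := by
  have h : ∀ T, rdPhi 0 T = π / 6 * arctan T := rd_zero_int
  unfold rdR
  norm_num
  rw [h, h, arctan_neg, arctan_one]
  ring

lemma rdR_cont {x : ℝ} (hx : 0 < x) : ContinuousAt rdR x := by
  have h := rdPhi_cont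
  have hx2 : 2 * x ≠ 0 := by positivity
  have c1 : ContinuousAt (fun x : ℝ => rdPhi ((1 - x) / (2 * x)) (-(x + 1) / (2 * x))) x := by
    have : ContinuousAt (fun x : ℝ => ((1 - x) / (2 * x), -(x + 1) / (2 * x))) x := by
      fun_prop (disch := assumption)
    exact ContinuousAt.comp (g := Function.uncurry rdPhi) h.continuousAt this
  have c2 : Continuous (fun x : ℝ => rdPhi ((1 - x) / 2) ((x + 1) / 2)) :=
    h.comp (by fun_prop : Continuous (fun x : ℝ => ((1 - x) / 2, (x + 1) / 2)))
  have c3 : Continuous (fun x : ℝ => rdPhi (x / 2) (x / 2)) :=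
    h.comp (by fun_prop : Continuous (fun x : ℝ => (x / 2, x / 2)))
  have c4 := Real.continuous_arctan
  unfold rdR
  exact ((((by fun_prop : ContinuousAt (fun x => π ^ 2 / 12 + π / 12 * (2 * arctan x - π / 2)) x).sub c1).add
    c2.continuousAt).sub continuousAt_const).add c3.continuousAt

lemma rdR_deriv {x : ℝ} (hx : x ∈ Set.Ioo (0:ℝ) 1) :
    HasDerivAt rdR (-(1/2) * (log x / (1 - x) + log (1 - x) / x)) x := by
  obtain ⟨J, hJ⟩ := rdJ
  obtain ⟨h0, h1⟩ := hx
  have hx0 : x ≠ 0 := h0.ne'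
  have hx1 : 1 - x ≠ 0 := (sub_pos.2 h1).ne'
  have hx2 : (1 + x ^ 2) ≠ 0 := by positivity
  have d1 := rdJ_curve hJ (hasDerivAt_inv hx0) (hasDerivAt_const x (1:ℝ)) ((one_lt_inv₀ h0).2 h1)
  have d2 := rdJ_curve hJ (hasDerivAt_neg x) (hasDerivAt_const x (-1:ℝ)) (by linarith)
  have d3 := rdJ_curve hJ (hasDerivAt_const x (0:ℝ)) (hasDerivAt_neg x) (by linarith)
  have d0 := ((((hasDerivAt_arctan x).const_mul 2).sub_const (π/2)).const_mul (π/12)).const_add (π^2/12)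
  have key := (((d0.sub (d1.sub_const (J (1,-1)))).add (d2.sub_const (J (1,-1)))).sub_const
    (rdPhi (1/2) (1/2))).add (d3.sub_const (J (1,-1)))
  have hev : rdR =ᶠ[nhds x] fun y => π ^ 2 / 12 + π / 12 * (2 * arctan y - π / 2)
      - (J (y⁻¹, 1) - J (1, -1)) + (J (-y, -1) - J (1, -1)) - rdPhi (1 / 2) (1 / 2)
      + (J (0, -y) - J (1, -1)) := by
    filter_upwards [Ioo_mem_nhds h0 h1] with y hy
    have y0 : y ≠ 0 := hy.1.ne'
    have hy1 : 0 < 1 - y := sub_pos.2 hy.2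
    have hy0 := hy.1
    unfold rdR
    rw [rdPhi_J hJ (a := (1 - y) / (2 * y)) _ (by positivity), rdPhi_J hJ (a := (1 - y) / 2) _ (by positivity),
      rdPhi_J hJ (a := y / 2) _ (by positivity)]
    rw [show -(-(y + 1) / (2 * y)) + (1 - y) / (2 * y) = y⁻¹ by field_simp; ring,
      show -(-(y + 1) / (2 * y)) - (1 - y) / (2 * y) = 1 by field_simp; ring,
      show -((y + 1) / 2) + (1 - y) / 2 = -y by ring,
      show -((y + 1) / 2) - (1 - y) / 2 = -1 by ring,
      show -(y / 2) + y / 2 = 0 by ring,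
      show -(y / 2) - y / 2 = -y by ring]
  refine (key.congr_of_eventuallyEq hev).congr_deriv ?_
  have l1 : log (x⁻¹ - 1) = log (1 - x) - log x := by
    rw [← log_div hx1 hx0]; congr 1; field_simp
  have l2 : rdm (x⁻¹) = rdm x - log x := by
    unfold rdm
    rw [show 1 + x⁻¹ ^ 2 = (1 + x ^ 2) / x ^ 2 by field_simp; ring, log_div hx2 (by positivity), log_pow]
    push_cast; ring
  have l3 : rdm (-x) = rdm x := by simp [rdm]
  have l4 : rdm (-1) = rdm 1 := by simp [rdm]
  have l5 : rdm 0 = 0 := by simp [rdm]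
  have l6 : -x - -1 = 1 - x := by ring
  have l7 : (0:ℝ) - -x = x := by ring
  have l8 : x⁻¹ - 1 = (1 - x) / x := by field_simp
  simp only [rdP, rdQ, l1, l2, l3, l4, l5, l6, l7, arctan_neg, arctan_one, arctan_zero]
  rw [l8]
  generalize rdm x = m
  generalize rdm 1 = m1
  generalize log x = lx
  generalize log (1 - x) = l1x
  have hx4 : 1 + (x⁻¹)^2 ≠ 0 := by positivity
  field_simp
  ring

theorem rogersL2_integral_formula (x : ℝ) (hx : x ∈ Set.Ioo (0:ℝ) 1) :
    rogersL2 x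
      = π ^ 2 / 6 / 2
        + (π ^ 2 / 6 / (2 * π)) * (Real.arctan (2 * x / (1 - x ^ 2)) - π / 2)
        - (∫ t in (0:ℝ)..(-(x + 1) / (2 * x)),
            Fc (2 * arccot (-t + (1 - x) / (2 * x))) (2 * arccot (-t - (1 - x) / (2 * x))))
        + (∫ t in (0:ℝ)..((x + 1) / 2),
            Fc (2 * arccot (-t + (1 - x) / 2)) (2 * arccot (-t - (1 - x) / 2)))
        - (∫ t in (0:ℝ)..(1 / 2 : ℝ),
            Fc (2 * arccot (-t + 1 / 2)) (2 * arccot (-t - 1 / 2)))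
        + (∫ t in (0:ℝ)..(x / 2),
            Fc (2 * arccot (-t + x / 2)) (2 * arccot (-t - x / 2))) := by
  obtain ⟨h0, h1⟩ := hx
  have hx1 : 0 < 1 - x := sub_pos.2 h1
  have e1 : ∀ t, _ := fun t => Fc_eq ((1 - x) / (2 * x)) t (by positivity)
  have e2 : ∀ t, _ := fun t => Fc_eq ((1 - x) / 2) t (by positivity)
  have e3 : ∀ t, _ := fun t => Fc_eq (1 / 2) t (by positivity)
  have e4 : ∀ t, _ := fun t => Fc_eq (x / 2) t (by positivity)
  simp only [e1, e2, e3, e4]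
  have hR : rogersL2 x = rdR x := by
    have hc := constant_of_has_deriv_right_zero (f := fun y => rogersL2 y - rdR y) (a := x) (b := 1) ?_ ?_ 1
      (Set.right_mem_Icc.2 h1.le)
    · simp only [rogers_one, rdR_one] at hc
      linarith
    · refine (rogers_cont.mono (Set.Icc_subset_Icc_left h0.le)).sub fun y hy => ?_
      exact (rdR_cont (h0.trans_le hy.1)).continuousWithinAt
    · intro y hy
      have hy' : y ∈ Set.Ioo (0:ℝ) 1 := ⟨h0.trans_le hy.1, hy.2⟩
      have := (rogers_deriv hy').sub (rdR_deriv hy')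
      rw [sub_self] at this
      exact this.hasDerivWithinAt
  rw [hR, ← two_mul_arctan (by linarith) h1]
  unfold rdR rdPhi
  have hpi := Real.pi_ne_zero
  field_simp
  ring
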